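/- Let d ≥ 1, r_0 > 1 and x ∈ ℝ^d with |x| ≥ r_0 + 1. Let a(x) ≥ 0 be a real number, b(x) ∈ ℝ^d, c(x) a symmetric real d×d matrix, and ν_x a Borel measure on ℝ^d with ν_x({0}) = 0, ν_x(B^c(0,1)) < ∞, ∫_{B(0,1)} |y|² ν_x(dy) < ∞, and such that y ↦ ln(max(|y+x|, r_0)) is ν_x-integrable on B^c(0,1). Let v̄ : ℝ^d → ℝ be twice continuously differentiable, of the form v̄(z) = g(|z|) for some nondecreasing g : [0,∞) → ℝ, and satisfying v̄(z) = ln|z| whenever |z| ≥ r_0. Then the function y ↦ v̄(x+y) − v̄(x) − ⟨y, ∇v̄(x)⟩ 1_{B(0,1)}(y) is ν_x-integrable and ℒv̄(x) ≤ −a(x) ln|x| + A(x) − C(x) + B(x) + (1/2)(|x|−1)^{−2} ∫_{B(0,1)} |y|² ν_x(dy) + ∫_{B^c(0,1)} (ln(max(|y+x|, r_0)) − ln|x|) ν_x(dy). -/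

import Mathlib

open MeasureTheory Real
open scoped RealInnerProductSpace

/-- The integro-differential operator ℒ of the paper (evaluated at a single point `x`,
with frozen coefficients `a`, `b`, `c` and Lévy measure `ν` at that point), applied to a
twice continuously differentiable function `f`. -/
noncomputable def genL (d : ℕ) (a : ℝ) (b : EuclideanSpace ℝ (Fin d))
    (c : Matrix (Fin d) (Fin d) ℝ) (ν : Measure (EuclideanSpace ℝ (Fin d)))
    (f : EuclideanSpace ℝ (Fin d) → ℝ) (x : EuclideanSpace ℝ (Fin d)) : ℝ :=
  -a * f x + ⟪b, gradient f x⟫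
    + (1 / 2) * ∑ i, ∑ j, c i j *
        iteratedFDeriv ℝ 2 f x ![EuclideanSpace.single i 1, EuclideanSpace.single j 1]
    + ∫ y, (f (x + y) - f x
        - Set.indicator (Metric.ball (0 : EuclideanSpace ℝ (Fin d)) 1)
            (fun y => ⟪y, gradient f x⟫) y) ∂ν


/-! Near `x` the function `v` is `log ‖·‖`, so the local part of `genL` is an exact computation.
For a jump `‖y‖ < 1` the point `x + y` still lies where `v` is `log ‖·‖`, and `log t ≤ t - 1` at
`t = ‖x + y‖² / ‖x‖²` bounds the compensated increment by `‖y‖² / (2‖x‖²)`; the inequality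
`1 - t⁻¹ ≤ log t` gives a quadratic lower bound, hence integrability. For a jump `‖y‖ ≥ 1`
monotonicity gives `v 0 ≤ v (x + y) ≤ log (max ‖x + y‖ r)`. -/

open Filter Topology Set Metric

section LogNorm

variable {E : Type*} [NormedAddCommGroup E] [InnerProductSpace ℝ E] {x : E}

lemma hasFDerivAt_log_norm (hx : x ≠ 0) :
    HasFDerivAt (fun z : E ↦ log ‖z‖) ((‖x‖ ^ 2)⁻¹ • innerSL ℝ x) x := by
  have log_norm_eq : (fun z : E ↦ log ‖z‖) = fun z ↦ (1 / 2 : ℝ) * log (‖z‖ ^ 2) := by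
    funext z
    rw [log_pow]
    push_cast
    ring
  rw [log_norm_eq]
  have hsq : HasFDerivAt (fun z : E ↦ ‖z‖ ^ 2) (2 • innerSL ℝ x) x :=
    (hasStrictFDerivAt_norm_sq x).hasFDerivAt
  refine ((hsq.log (by positivity)).const_mul (1 / 2 : ℝ)).congr_fderiv ?_
  module

lemma fderiv_inv_norm_sq_smul_innerSL_apply (hx : x ≠ 0) (h k : E) :
    fderiv ℝ (fun z : E ↦ (‖z‖ ^ 2)⁻¹ • innerSL ℝ z) x h k =
      (‖x‖ ^ 2)⁻¹ * ⟪h, k⟫ - 2 * ((‖x‖ ^ 2)⁻¹) ^ 2 * ⟪x, h⟫ * ⟪x, k⟫ := by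
  have hsq : HasFDerivAt (fun z : E ↦ ‖z‖ ^ 2) (2 • innerSL ℝ x) x :=
    (hasStrictFDerivAt_norm_sq x).hasFDerivAt
  have hinv : HasFDerivAt (fun z : E ↦ (‖z‖ ^ 2)⁻¹)
      ((-((‖x‖ ^ 2) ^ 2)⁻¹) • (2 • innerSL ℝ x)) x :=
    (hasDerivAt_inv (by positivity)).comp_hasFDerivAt x hsq
  have hinner : HasFDerivAt (fun z : E ↦ innerSL ℝ z) (innerSL ℝ : E →L[ℝ] E →L[ℝ] ℝ) x :=
    (innerSL ℝ : E →L[ℝ] E →L[ℝ] ℝ).hasFDerivAt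
  rw [(hinv.fun_smul hinner).fderiv]
  change (‖x‖ ^ 2)⁻¹ * ⟪h, k⟫ + -((‖x‖ ^ 2) ^ 2)⁻¹ * (2 • ⟪x, h⟫) * ⟪x, k⟫ = _
  ring

lemma iteratedFDeriv_two_log_norm (hx : x ≠ 0) (h k : E) :
    iteratedFDeriv ℝ 2 (fun z : E ↦ log ‖z‖) x ![h, k] =
      (‖x‖ ^ 2)⁻¹ * ⟪h, k⟫ - 2 * ((‖x‖ ^ 2)⁻¹) ^ 2 * ⟪x, h⟫ * ⟪x, k⟫ := by
  have hfderiv : fderiv ℝ (fun z : E ↦ log ‖z‖) =ᶠ[𝓝 x] fun z ↦ (‖z‖ ^ 2)⁻¹ • innerSL ℝ z := by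
    filter_upwards [isOpen_ne.mem_nhds hx] with z hz using (hasFDerivAt_log_norm hz).fderiv
  rw [iteratedFDeriv_two_apply, hfderiv.fderiv_eq]
  exact fderiv_inv_norm_sq_smul_innerSL_apply hx h k

lemma log_norm_add_sub_le {y : E} (hx : x ≠ 0) (hxy : x + y ≠ 0) :
    log ‖x + y‖ - log ‖x‖ - (‖x‖ ^ 2)⁻¹ * ⟪x, y⟫ ≤ 1 / 2 * (‖x‖ ^ 2)⁻¹ * ‖y‖ ^ 2 := by
  have hlog : log (‖x + y‖ ^ 2 / ‖x‖ ^ 2) ≤ ‖x + y‖ ^ 2 / ‖x‖ ^ 2 - 1 :=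
    log_le_sub_one_of_pos (by positivity)
  have hratio : ‖x + y‖ ^ 2 / ‖x‖ ^ 2 - 1 =
      2 * ((‖x‖ ^ 2)⁻¹ * ⟪x, y⟫) + (‖x‖ ^ 2)⁻¹ * ‖y‖ ^ 2 := by
    rw [norm_add_sq_real]
    field_simp
    ring
  rw [hratio, log_div (by positivity) (by positivity), log_pow, log_pow] at hlog
  push_cast at hlog
  linarith

lemma le_log_norm_add_sub {y : E} (hx : x ≠ 0) (hxy : x + y ≠ 0) :
    -(1 / 2 * (‖x‖⁻¹ + ‖x + y‖⁻¹) ^ 2 * ‖y‖ ^ 2) ≤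
      log ‖x + y‖ - log ‖x‖ - (‖x‖ ^ 2)⁻¹ * ⟪x, y⟫ := by
  have hlog : 1 - (‖x + y‖ ^ 2 / ‖x‖ ^ 2)⁻¹ ≤ log (‖x + y‖ ^ 2 / ‖x‖ ^ 2) :=
    one_sub_inv_le_log_of_pos (by positivity)
  -- `1 - t⁻¹ = (t - 1) - (t - 1)² / t`, where `t - 1` contains the inner product
  have hratio : 1 - (‖x + y‖ ^ 2 / ‖x‖ ^ 2)⁻¹ =
      2 * ((‖x‖ ^ 2)⁻¹ * ⟪x, y⟫) + (‖y‖ / ‖x‖) ^ 2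
        - (‖x‖⁻¹ + ‖x + y‖⁻¹) ^ 2 * (‖x + y‖ - ‖x‖) ^ 2 := by
    have hinner : ⟪x, y⟫ = (‖x + y‖ ^ 2 - ‖x‖ ^ 2 - ‖y‖ ^ 2) / 2 := by
      rw [norm_add_sq_real]
      ring
    rw [hinner]
    field_simp
    ring
  have hdiff : (‖x + y‖ - ‖x‖) ^ 2 ≤ ‖y‖ ^ 2 :=
    sq_le_sq.mpr (by simpa using abs_norm_sub_norm_le (x + y) x)
  have hmul := mul_le_mul_of_nonneg_left hdiff (sq_nonneg (‖x‖⁻¹ + ‖x + y‖⁻¹))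
  rw [hratio, log_div (by positivity) (by positivity), log_pow, log_pow] at hlog
  push_cast at hlog
  linarith [sq_nonneg (‖y‖ / ‖x‖)]

lemma inner_gradient_of_eventuallyEq_log_norm [CompleteSpace E] {v : E → ℝ} (hx : x ≠ 0)
    (hv : v =ᶠ[𝓝 x] fun z ↦ log ‖z‖) (y : E) : ⟪y, gradient v x⟫ = (‖x‖ ^ 2)⁻¹ * ⟪x, y⟫ := by
  simp [inner_gradient_right, hv.fderiv_eq, (hasFDerivAt_log_norm hx).fderiv]

end LogNorm

lemma sum_mul_iteratedFDeriv_two_log_norm {ι : Type*} [Fintype ι] [DecidableEq ι]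
    {x : EuclideanSpace ℝ ι} (hx : x ≠ 0) (c : Matrix ι ι ℝ) :
    ∑ i, ∑ j, c i j * iteratedFDeriv ℝ 2 (fun z : EuclideanSpace ℝ ι ↦ log ‖z‖) x
        ![EuclideanSpace.single i 1, EuclideanSpace.single j 1] =
      (‖x‖ ^ 2)⁻¹ * c.trace - 2 * ((‖x‖ ^ 2)⁻¹) ^ 2 * ∑ i, ∑ j, c i j * x i * x j := by
  have htrace : c.trace = ∑ i, ∑ j, c i j * (if i = j then 1 else 0) := by simp [Matrix.trace]
  rw [htrace]
  simp only [Finset.mul_sum, ← Finset.sum_sub_distrib]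
  refine Finset.sum_congr rfl fun i _ ↦ Finset.sum_congr rfl fun j _ ↦ ?_
  simp only [iteratedFDeriv_two_log_norm hx, EuclideanSpace.inner_single_right,
    PiLp.single_apply, conj_trivial, one_mul, eq_comm (a := j)]
  ring

section Radial

variable {E : Type*} [NormedAddCommGroup E]

/-- The class of the paper's functions `v̄`: radially nondecreasing, and equal to `log ‖·‖` outside
the ball of radius `r`. Being a nondecreasing function of the norm is encoded as monotonicity with
respect to the preorder `‖z‖ ≤ ‖w‖`, which also forces `v` to be radial. -/
structure IsRadialLogExtension (v : E → ℝ) (r : ℝ) : Prop where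
  le_of_norm_le : ∀ z w, ‖z‖ ≤ ‖w‖ → v z ≤ v w
  eq_log_norm : ∀ z, r ≤ ‖z‖ → v z = log ‖z‖

namespace IsRadialLogExtension

variable {v : E → ℝ} {r : ℝ} {x : E}

lemma measurable [MeasurableSpace E] [BorelSpace E] (hv : IsRadialLogExtension v r) :
    Measurable v := by
  refine measurable_of_Iio fun t ↦ ?_
  have hpreimage : v ⁻¹' Iio t = norm ⁻¹' (lowerClosure (norm '' (v ⁻¹' Iio t)) : Set ℝ) := by
    ext z
    refine ⟨fun hz ↦ subset_lowerClosure (mem_image_of_mem norm hz), ?_⟩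
    rintro ⟨-, ⟨w, hw, rfl⟩, hzw⟩
    exact (hv.le_of_norm_le z w hzw).trans_lt hw
  rw [hpreimage]
  exact measurable_norm (lowerClosure _).lower.ordConnected.measurableSet

lemma eventuallyEq_log_norm (hv : IsRadialLogExtension v r) (hx : r < ‖x‖) :
    v =ᶠ[𝓝 x] fun z ↦ log ‖z‖ := by
  filter_upwards [(isOpen_lt continuous_const continuous_norm).mem_nhds hx] with z hz
    using hv.eq_log_norm z (le_of_lt hz)

lemma le_log_max [NormedSpace ℝ E] [Nontrivial E] (hv : IsRadialLogExtension v r) (z : E) :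
    v z ≤ log (max ‖z‖ r) := by
  obtain ⟨w, hw⟩ := exists_norm_eq E ((norm_nonneg z).trans (le_max_left ‖z‖ r))
  calc v z ≤ v w := hv.le_of_norm_le z w (hw ▸ le_max_left _ _)
    _ = log ‖w‖ := hv.eq_log_norm w (hw ▸ le_max_right _ _)
    _ = log (max ‖z‖ r) := by rw [hw]

end IsRadialLogExtension

end Radial

section Jump

variable {E : Type*} [NormedAddCommGroup E] [InnerProductSpace ℝ E] [CompleteSpace E]

/-- The integrand of the jump part of `genL`: the increment of `f` along the jump `y` from `x`,
with its linear part removed for the small jumps `‖y‖ < 1`. -/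
noncomputable def compensatedIncrement (f : E → ℝ) (x y : E) : ℝ :=
  f (x + y) - f x - (ball (0 : E) 1).indicator (fun y ↦ ⟪y, gradient f x⟫) y

lemma compensatedIncrement_of_notMem_ball (f : E → ℝ) (x : E) {y : E}
    (hy : y ∉ ball (0 : E) 1) : compensatedIncrement f x y = f (x + y) - f x := by
  rw [compensatedIncrement, indicator_of_notMem hy, sub_zero]

lemma measurable_compensatedIncrement [MeasurableSpace E] [BorelSpace E]
    {f : E → ℝ} (hf : Measurable f) (x : E) : Measurable (compensatedIncrement f x) := by
  have hinner : Measurable fun y : E ↦ ⟪y, gradient f x⟫ :=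
    (continuous_id.inner continuous_const).measurable
  exact ((hf.comp (measurable_const_add x)).sub_const _).sub (hinner.indicator measurableSet_ball)

namespace IsRadialLogExtension

variable {v : E → ℝ} {r : ℝ} {x : E}

lemma compensatedIncrement_of_mem_ball (hv : IsRadialLogExtension v r) (hr : 0 < r)
    (hx : r < ‖x‖) {y : E} (hy : y ∈ ball (0 : E) 1) (hxy : r ≤ ‖x + y‖) :
    compensatedIncrement v x y = log ‖x + y‖ - log ‖x‖ - (‖x‖ ^ 2)⁻¹ * ⟪x, y⟫ := by
  have hx0 : x ≠ 0 := norm_pos_iff.mp (hr.trans hx)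
  rw [compensatedIncrement, indicator_of_mem hy, hv.eq_log_norm _ hxy, hv.eq_log_norm x hx.le,
    inner_gradient_of_eventuallyEq_log_norm hx0 (hv.eventuallyEq_log_norm hx)]

lemma compensatedIncrement_mem_Icc_of_mem_ball (hv : IsRadialLogExtension v r) (hr : 0 < r)
    (hx : r + 1 ≤ ‖x‖) {y : E} (hy : y ∈ ball (0 : E) 1) :
    compensatedIncrement v x y ∈ Icc (-(1 / 2 * (‖x‖⁻¹ + r⁻¹) ^ 2) * ‖y‖ ^ 2)
      (1 / 2 * (‖x‖ ^ 2)⁻¹ * ‖y‖ ^ 2) := by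
  have hxy : r ≤ ‖x + y‖ := by
    linarith [norm_sub_le_norm_add x y, mem_ball_zero_iff.mp hy]
  have hx0 : x ≠ 0 := norm_pos_iff.mp (by linarith)
  have hxy0 : x + y ≠ 0 := norm_pos_iff.mp (by linarith)
  rw [hv.compensatedIncrement_of_mem_ball hr (by linarith) hy hxy]
  refine ⟨le_trans ?_ (le_log_norm_add_sub hx0 hxy0), log_norm_add_sub_le hx0 hxy0⟩
  rw [neg_mul]
  gcongr

lemma compensatedIncrement_mem_Icc_of_notMem_ball (hv : IsRadialLogExtension v r)
    (hr : 0 ≤ r) (hx : r < ‖x‖) {y : E} (hy : y ∉ ball (0 : E) 1) :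
    compensatedIncrement v x y ∈ Icc (v 0 - log ‖x‖) (log (max ‖y + x‖ r) - log ‖x‖) := by
  have : Nontrivial E := nontrivial_of_ne x 0 (norm_pos_iff.mp (hr.trans_lt hx))
  rw [compensatedIncrement_of_notMem_ball v x hy, hv.eq_log_norm x hx.le, add_comm x y]
  exact ⟨sub_le_sub_right (hv.le_of_norm_le 0 _ (by simp)) _,
    sub_le_sub_right (hv.le_log_max _) _⟩

variable [MeasurableSpace E] [BorelSpace E] {ν : Measure E}

lemma integrableOn_ball (hv : IsRadialLogExtension v r) (hr : 0 < r) (hx : r + 1 ≤ ‖x‖)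
    (hνsq : IntegrableOn (fun y ↦ ‖y‖ ^ 2) (ball (0 : E) 1) ν) :
    IntegrableOn (compensatedIncrement v x) (ball (0 : E) 1) ν := by
  have hbounds := fun y (hy : y ∈ ball (0 : E) 1) ↦
    hv.compensatedIncrement_mem_Icc_of_mem_ball hr hx hy
  exact integrable_of_le_of_le
    (measurable_compensatedIncrement hv.measurable x).aestronglyMeasurable
    (ae_restrict_of_forall_mem measurableSet_ball fun y hy ↦ (hbounds y hy).1)
    (ae_restrict_of_forall_mem measurableSet_ball fun y hy ↦ (hbounds y hy).2)
    (hνsq.const_mul _) (hνsq.const_mul _)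

lemma integrableOn_compl_ball (hv : IsRadialLogExtension v r) (hr : 0 ≤ r) (hx : r < ‖x‖)
    (hνfin : ν (ball (0 : E) 1)ᶜ < ⊤)
    (hνlog : IntegrableOn (fun y ↦ log (max ‖y + x‖ r)) (ball (0 : E) 1)ᶜ ν) :
    IntegrableOn (compensatedIncrement v x) (ball (0 : E) 1)ᶜ ν := by
  have hbounds := fun y (hy : y ∈ (ball (0 : E) 1)ᶜ) ↦
    hv.compensatedIncrement_mem_Icc_of_notMem_ball hr hx hy
  exact integrable_of_le_of_le
    (measurable_compensatedIncrement hv.measurable x).aestronglyMeasurable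
    (ae_restrict_of_forall_mem measurableSet_ball.compl fun y hy ↦ (hbounds y hy).1)
    (ae_restrict_of_forall_mem measurableSet_ball.compl fun y hy ↦ (hbounds y hy).2)
    (integrableOn_const hνfin.ne) (hνlog.sub (integrableOn_const hνfin.ne))

lemma integrable_compensatedIncrement (hv : IsRadialLogExtension v r) (hr : 0 < r)
    (hx : r + 1 ≤ ‖x‖) (hνfin : ν (ball (0 : E) 1)ᶜ < ⊤)
    (hνsq : IntegrableOn (fun y ↦ ‖y‖ ^ 2) (ball (0 : E) 1) ν)
    (hνlog : IntegrableOn (fun y ↦ log (max ‖y + x‖ r)) (ball (0 : E) 1)ᶜ ν) :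
    Integrable (compensatedIncrement v x) ν := by
  rw [← integrableOn_univ, ← union_compl_self (ball (0 : E) 1)]
  exact (hv.integrableOn_ball hr hx hνsq).union
    (hv.integrableOn_compl_ball hr.le (by linarith) hνfin hνlog)

lemma integral_compensatedIncrement_le (hv : IsRadialLogExtension v r) (hr : 0 < r)
    (hx : r + 1 ≤ ‖x‖) (hνfin : ν (ball (0 : E) 1)ᶜ < ⊤)
    (hνsq : IntegrableOn (fun y ↦ ‖y‖ ^ 2) (ball (0 : E) 1) ν)
    (hνlog : IntegrableOn (fun y ↦ log (max ‖y + x‖ r)) (ball (0 : E) 1)ᶜ ν) :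
    ∫ y, compensatedIncrement v x y ∂ν ≤
      1 / 2 * (‖x‖ ^ 2)⁻¹ * ∫ y in ball (0 : E) 1, ‖y‖ ^ 2 ∂ν
        + ∫ y in (ball (0 : E) 1)ᶜ, (log (max ‖y + x‖ r) - log ‖x‖) ∂ν := by
  have hrx : r < ‖x‖ := by linarith
  have hsmall : ∫ y in ball (0 : E) 1, compensatedIncrement v x y ∂ν ≤
      ∫ y in ball (0 : E) 1, 1 / 2 * (‖x‖ ^ 2)⁻¹ * ‖y‖ ^ 2 ∂ν :=
    setIntegral_mono_on (hv.integrableOn_ball hr hx hνsq) (hνsq.const_mul _) measurableSet_ball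
      fun y hy ↦ (hv.compensatedIncrement_mem_Icc_of_mem_ball hr hx hy).2
  have hlarge : ∫ y in (ball (0 : E) 1)ᶜ, compensatedIncrement v x y ∂ν ≤
      ∫ y in (ball (0 : E) 1)ᶜ, (log (max ‖y + x‖ r) - log ‖x‖) ∂ν :=
    setIntegral_mono_on (hv.integrableOn_compl_ball hr.le hrx hνfin hνlog)
      (hνlog.sub (integrableOn_const hνfin.ne)) measurableSet_ball.compl
      fun y hy ↦ (hv.compensatedIncrement_mem_Icc_of_notMem_ball hr.le hrx hy).2
  rw [integral_const_mul] at hsmall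
  rw [← integral_add_compl measurableSet_ball
    (hv.integrable_compensatedIncrement hr hx hνfin hνsq hνlog)]
  exact add_le_add hsmall hlarge

end IsRadialLogExtension

end Jump

section Generator

lemma inv_sq_le_sub_one_rpow_neg_two {t : ℝ} (ht : 1 < t) : (t ^ 2)⁻¹ ≤ (t - 1) ^ (-2 : ℝ) := by
  have : 0 < t - 1 := sub_pos.mpr ht
  calc (t ^ 2)⁻¹ ≤ ((t - 1) ^ 2)⁻¹ := by gcongr; linarith
    _ = (t - 1) ^ (-2 : ℝ) := by rw [rpow_neg_ofNat]; rfl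

variable {d : ℕ} {x : EuclideanSpace ℝ (Fin d)} {v : EuclideanSpace ℝ (Fin d) → ℝ}

lemma genL_of_eventuallyEq_log_norm (hx : x ≠ 0) (hv : v =ᶠ[𝓝 x] fun z ↦ log ‖z‖) (a : ℝ)
    (b : EuclideanSpace ℝ (Fin d)) (c : Matrix (Fin d) (Fin d) ℝ)
    (ν : Measure (EuclideanSpace ℝ (Fin d))) :
    genL d a b c ν v x =
      -a * log ‖x‖
        + ((1 / 2) * ‖x‖ ^ (-2 : ℝ) * c.trace
            - ‖x‖ ^ (-4 : ℝ) * ∑ i, ∑ j, c i j * x i * x j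
            + ‖x‖ ^ (-2 : ℝ) * ⟪x, b⟫)
        + ∫ y, compensatedIncrement v x y ∂ν := by
  have hpow_two : ‖x‖ ^ (-2 : ℝ) = (‖x‖ ^ 2)⁻¹ := by rw [rpow_neg_ofNat]; rfl
  have hpow_four : ‖x‖ ^ (-4 : ℝ) = ((‖x‖ ^ 2)⁻¹) ^ 2 := by
    rw [rpow_neg_ofNat, inv_pow, ← pow_mul]
    rfl
  simp only [genL, compensatedIncrement, hv.eq_of_nhds, (hv.iteratedFDeriv ℝ 2).eq_of_nhds,
    sum_mul_iteratedFDeriv_two_log_norm hx, inner_gradient_of_eventuallyEq_log_norm hx hv b,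
    hpow_two, hpow_four]
  ring

theorem stmt_4_general {r : ℝ} (hr : 0 < r) (hx : r + 1 ≤ ‖x‖) (a : ℝ)
    (b : EuclideanSpace ℝ (Fin d)) (c : Matrix (Fin d) (Fin d) ℝ)
    {ν : Measure (EuclideanSpace ℝ (Fin d))}
    (hνfin : ν (ball (0 : EuclideanSpace ℝ (Fin d)) 1)ᶜ < ⊤)
    (hνsq : IntegrableOn (fun y ↦ ‖y‖ ^ 2) (ball (0 : EuclideanSpace ℝ (Fin d)) 1) ν)
    (hνlog : IntegrableOn (fun y ↦ log (max ‖y + x‖ r))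
      (ball (0 : EuclideanSpace ℝ (Fin d)) 1)ᶜ ν)
    (hv : IsRadialLogExtension v r) :
    Integrable (compensatedIncrement v x) ν ∧
    genL d a b c ν v x ≤
      -a * log ‖x‖
        + ((1 / 2) * ‖x‖ ^ (-2 : ℝ) * c.trace
            - ‖x‖ ^ (-4 : ℝ) * ∑ i, ∑ j, c i j * x i * x j
            + ‖x‖ ^ (-2 : ℝ) * ⟪x, b⟫)
        + (1 / 2) * (‖x‖ - 1) ^ (-2 : ℝ) *
            ∫ y in ball (0 : EuclideanSpace ℝ (Fin d)) 1, ‖y‖ ^ 2 ∂ν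
        + ∫ y in (ball (0 : EuclideanSpace ℝ (Fin d)) 1)ᶜ,
            (log (max ‖y + x‖ r) - log ‖x‖) ∂ν := by
  refine ⟨hv.integrable_compensatedIncrement hr hx hνfin hνsq hνlog, ?_⟩
  have hx0 : x ≠ 0 := norm_pos_iff.mp (by linarith)
  have hjump := hv.integral_compensatedIncrement_le hr hx hνfin hνsq hνlog
  have hsq_nonneg : 0 ≤ ∫ y in ball (0 : EuclideanSpace ℝ (Fin d)) 1, ‖y‖ ^ 2 ∂ν :=
    integral_nonneg fun y ↦ sq_nonneg ‖y‖
  have hsmall := mul_le_mul_of_nonneg_right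
    (inv_sq_le_sub_one_rpow_neg_two (t := ‖x‖) (by linarith)) hsq_nonneg
  rw [genL_of_eventuallyEq_log_norm hx0 (hv.eventuallyEq_log_norm (by linarith))]
  linarith

end Generator

theorem stmt_4 (d : ℕ) (hd : 1 ≤ d) (r0 : ℝ) (hr0 : 1 < r0)
    (x : EuclideanSpace ℝ (Fin d)) (hx : r0 + 1 ≤ ‖x‖)
    (a : ℝ) (ha : 0 ≤ a) (b : EuclideanSpace ℝ (Fin d))
    (c : Matrix (Fin d) (Fin d) ℝ) (hc : c.IsSymm)
    (ν : Measure (EuclideanSpace ℝ (Fin d)))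
    (hν0 : ν {0} = 0)
    (hνfin : ν ((Metric.ball (0 : EuclideanSpace ℝ (Fin d)) 1)ᶜ) < ⊤)
    (hνsq : IntegrableOn (fun y => ‖y‖ ^ 2)
      (Metric.ball (0 : EuclideanSpace ℝ (Fin d)) 1) ν)
    (hνlog : IntegrableOn (fun y => Real.log (max ‖y + x‖ r0))
      ((Metric.ball (0 : EuclideanSpace ℝ (Fin d)) 1)ᶜ) ν)
    (v : EuclideanSpace ℝ (Fin d) → ℝ) (hv : ContDiff ℝ 2 v)
    (g : ℝ → ℝ) (hg : MonotoneOn g (Set.Ici 0)) (hvg : ∀ z, v z = g ‖z‖)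
    (hvlog : ∀ z : EuclideanSpace ℝ (Fin d), r0 ≤ ‖z‖ → v z = Real.log ‖z‖) :
    Integrable (fun y => v (x + y) - v x
      - Set.indicator (Metric.ball (0 : EuclideanSpace ℝ (Fin d)) 1)
          (fun y => ⟪y, gradient v x⟫) y) ν ∧
    genL d a b c ν v x ≤
      -a * Real.log ‖x‖
        + ((1 / 2) * ‖x‖ ^ (-2 : ℝ) * c.trace
            - ‖x‖ ^ (-4 : ℝ) * ∑ i, ∑ j, c i j * x i * x j
            + ‖x‖ ^ (-2 : ℝ) * ⟪x, b⟫)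
        + (1 / 2) * (‖x‖ - 1) ^ (-2 : ℝ) *
            ∫ y in Metric.ball (0 : EuclideanSpace ℝ (Fin d)) 1, ‖y‖ ^ 2 ∂ν
        + ∫ y in (Metric.ball (0 : EuclideanSpace ℝ (Fin d)) 1)ᶜ,
            (Real.log (max ‖y + x‖ r0) - Real.log ‖x‖) ∂ν := by
  exact stmt_4_general (zero_lt_one.trans hr0) hx a b c hνfin hνsq hνlog
    ⟨fun z w h ↦ by simpa only [hvg] using hg (norm_nonneg z) (norm_nonneg w) h, hvlog⟩
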